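/- Let (𝔤, 𝔥, ∂, L) be a crossed module of real Lie algebras equipped with inner products B_𝔥 on 𝔥 and B_𝔤 on 𝔤 such that the adjoint representation of 𝔤 acts by skew-adjoint operators on (𝔤, B_𝔤), i.e. B_𝔤([x,x'],x'') + B_𝔤(x',[x,x'']) = 0, and each L_x acts skew-adjointly on (𝔥, B_𝔥), i.e. B_𝔥(L_x y, y') + B_𝔥(y, L_x y') = 0. Let B be the direct-sum inner product B((y,x),(y',x')) = B_𝔥(y,y') + B_𝔤(x,x') on 𝔥 ⋊ 𝔤. Then the adjoint representation of 𝔥 ⋊ 𝔤 acts by skew-adjoint operators with respect to B if and only if L = 0. -/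

import Mathlib

/-- A crossed module of real Lie algebras `(𝔤, 𝔥, ∂, L)`: a Lie algebra homomorphism
`∂ = d : 𝔥 → 𝔤` and a Lie algebra homomorphism `L` from `𝔤` to the derivations of `𝔥`,
satisfying the Peiffer identities `∂(L x y) = ⁅x, ∂y⁆` and `L (∂y) y' = ⁅y, y'⁆`. -/
structure CrossedModuleLieAlg (𝔤 𝔥 : Type*) [LieRing 𝔤] [LieAlgebra ℝ 𝔤]
    [LieRing 𝔥] [LieAlgebra ℝ 𝔥] where
  d : 𝔥 →ₗ[ℝ] 𝔤
  L : 𝔤 →ₗ[ℝ] 𝔥 →ₗ[ℝ] 𝔥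
  d_bracket : ∀ y y' : 𝔥, d ⁅y, y'⁆ = ⁅d y, d y'⁆
  L_der : ∀ (x : 𝔤) (y y' : 𝔥), L x ⁅y, y'⁆ = ⁅L x y, y'⁆ + ⁅y, L x y'⁆
  L_bracket : ∀ (x x' : 𝔤) (y : 𝔥), L ⁅x, x'⁆ y = L x (L x' y) - L x' (L x y)
  peiffer₁ : ∀ (x : 𝔤) (y : 𝔥), d (L x y) = ⁅x, d y⁆
  peiffer₂ : ∀ y y' : 𝔥, L (d y) y' = ⁅y, y'⁆

/-- The bracket of the semidirect product `𝔥 ⋊ 𝔤`: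
`[(y,x),(y',x')] = ([y,y'] + L_x y' − L_{x'} y, [x,x'])`. -/
def sdBracket {𝔤 𝔥 : Type*} [LieRing 𝔤] [LieAlgebra ℝ 𝔤] [LieRing 𝔥] [LieAlgebra ℝ 𝔥]
    (cm : CrossedModuleLieAlg 𝔤 𝔥) : 𝔥 × 𝔤 → 𝔥 × 𝔤 → 𝔥 × 𝔤 :=
  fun a b => (⁅a.1, b.1⁆ + cm.L a.2 b.1 - cm.L b.2 a.1, ⁅a.2, b.2⁆)

/-!
Testing skewness of `ad (y, 0)` on the pair `(0, x)`, `(z, 0)` leaves only the term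
`-B_𝔥 (L x y) z`, so `L x y` lies in the left kernel of `B_𝔥`. Conversely, if `L = 0` then the
second Peiffer identity makes `𝔥` abelian, and only the bracket of `𝔤` survives in `𝔥 ⋊ 𝔤`.
-/

theorem separatingLeft_of_apply_self_ne_zero {R M : Type*} [CommSemiring R] [AddCommMonoid M]
    [Module R M] {B : M →ₗ[R] M →ₗ[R] R} (hB : ∀ x, x ≠ 0 → B x x ≠ 0) : B.SeparatingLeft := by
  intro x hx
  by_contra hne
  exact hB x hne (hx x)

namespace CrossedModuleLieAlg

variable {𝔤 𝔥 : Type*} [LieRing 𝔤] [LieAlgebra ℝ 𝔤] [LieRing 𝔥] [LieAlgebra ℝ 𝔥]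
  {cm : CrossedModuleLieAlg 𝔤 𝔥} {Bh : 𝔥 →ₗ[ℝ] 𝔥 →ₗ[ℝ] ℝ} {Bg : 𝔤 →ₗ[ℝ] 𝔤 →ₗ[ℝ] ℝ}

/-- The adjoint representation of `𝔥 ⋊ 𝔤` acts by skew-adjoint operators with respect to the
direct sum of `Bh` and `Bg`, which are arbitrary bilinear forms here. -/
def IsAdSkew (cm : CrossedModuleLieAlg 𝔤 𝔥) (Bh : 𝔥 →ₗ[ℝ] 𝔥 →ₗ[ℝ] ℝ)
    (Bg : 𝔤 →ₗ[ℝ] 𝔤 →ₗ[ℝ] ℝ) : Prop :=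
  ∀ a b c : 𝔥 × 𝔤,
    (Bh (sdBracket cm a b).1 c.1 + Bg (sdBracket cm a b).2 c.2)
      + (Bh b.1 (sdBracket cm a c).1 + Bg b.2 (sdBracket cm a c).2) = 0

theorem sdBracket_inl_inr (cm : CrossedModuleLieAlg 𝔤 𝔥) (y : 𝔥) (x : 𝔤) :
    sdBracket cm (y, 0) (0, x) = (-cm.L x y, 0) := by
  simp [sdBracket]

theorem sdBracket_inl_inl (cm : CrossedModuleLieAlg 𝔤 𝔥) (y y' : 𝔥) :
    sdBracket cm (y, 0) (y', 0) = (⁅y, y'⁆, 0) := by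
  simp [sdBracket]

theorem IsAdSkew.apply_L_eq_zero (h : cm.IsAdSkew Bh Bg) (x : 𝔤) (y z : 𝔥) :
    Bh (cm.L x y) z = 0 := by
  simpa [sdBracket_inl_inr, sdBracket_inl_inl] using h (y, 0) (0, x) (z, 0)

theorem IsAdSkew.L_eq_zero (h : cm.IsAdSkew Bh Bg) (hBh : Bh.SeparatingLeft) : cm.L = 0 :=
  LinearMap.ext₂ fun x y => hBh _ (h.apply_L_eq_zero x y)

theorem lie_eq_zero_of_L_eq_zero (hL : cm.L = 0) (y y' : 𝔥) : ⁅y, y'⁆ = 0 := by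
  rw [← cm.peiffer₂, hL, LinearMap.zero_apply, LinearMap.zero_apply]

theorem sdBracket_of_L_eq_zero (hL : cm.L = 0) (a b : 𝔥 × 𝔤) :
    sdBracket cm a b = (0, ⁅a.2, b.2⁆) := by
  simp [sdBracket, hL, lie_eq_zero_of_L_eq_zero hL]

theorem isAdSkew_of_L_eq_zero (hL : cm.L = 0)
    (hskew_g : ∀ x x' x'' : 𝔤, Bg ⁅x, x'⁆ x'' + Bg x' ⁅x, x''⁆ = 0) : cm.IsAdSkew Bh Bg := by
  intro a b c
  simpa [sdBracket_of_L_eq_zero hL] using hskew_g a.2 b.2 c.2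

end CrossedModuleLieAlg

theorem sd_adjoint_skew_iff_L_eq_zero_general
    {𝔤 𝔥 : Type*} [LieRing 𝔤] [LieAlgebra ℝ 𝔤] [LieRing 𝔥] [LieAlgebra ℝ 𝔥]
    (cm : CrossedModuleLieAlg 𝔤 𝔥)
    (Bh : 𝔥 →ₗ[ℝ] 𝔥 →ₗ[ℝ] ℝ) (Bg : 𝔤 →ₗ[ℝ] 𝔤 →ₗ[ℝ] ℝ) (hBh : Bh.SeparatingLeft)
    (hskew_g : ∀ x x' x'' : 𝔤, Bg ⁅x, x'⁆ x'' + Bg x' ⁅x, x''⁆ = 0) :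
    cm.IsAdSkew Bh Bg ↔ cm.L = 0 :=
  ⟨fun h => h.L_eq_zero hBh, fun hL => CrossedModuleLieAlg.isAdSkew_of_L_eq_zero hL hskew_g⟩

/-- Let `(𝔤, 𝔥, ∂, L)` be a crossed module of real Lie algebras with
inner products `B_𝔥`, `B_𝔤` such that `ad(𝔤)` is skew-adjoint on `(𝔤, B_𝔤)` and each
`L_x` is skew-adjoint on `(𝔥, B_𝔥)`.  Then the adjoint representation of `𝔥 ⋊ 𝔤` is
skew-adjoint with respect to the direct-sum inner product `B = B_𝔥 ⊕ B_𝔤` if and only if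
`L = 0`. -/
theorem sd_adjoint_skew_iff_L_eq_zero
    {𝔤 𝔥 : Type*} [LieRing 𝔤] [LieAlgebra ℝ 𝔤] [LieRing 𝔥] [LieAlgebra ℝ 𝔥]
    (cm : CrossedModuleLieAlg 𝔤 𝔥)
    (Bh : 𝔥 →ₗ[ℝ] 𝔥 →ₗ[ℝ] ℝ) (Bg : 𝔤 →ₗ[ℝ] 𝔤 →ₗ[ℝ] ℝ)
    (hsymm_h : ∀ y y' : 𝔥, Bh y y' = Bh y' y)
    (hpos_h : ∀ y : 𝔥, y ≠ 0 → 0 < Bh y y)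
    (hsymm_g : ∀ x x' : 𝔤, Bg x x' = Bg x' x)
    (hpos_g : ∀ x : 𝔤, x ≠ 0 → 0 < Bg x x)
    (hskew_g : ∀ x x' x'' : 𝔤, Bg ⁅x, x'⁆ x'' + Bg x' ⁅x, x''⁆ = 0)
    (hskew_L : ∀ (x : 𝔤) (y y' : 𝔥), Bh (cm.L x y) y' + Bh y (cm.L x y') = 0) :
    (∀ a b c : 𝔥 × 𝔤,
      (Bh (sdBracket cm a b).1 c.1 + Bg (sdBracket cm a b).2 c.2)
        + (Bh b.1 (sdBracket cm a c).1 + Bg b.2 (sdBracket cm a c).2) = 0)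
      ↔ (∀ (x : 𝔤) (y : 𝔥), cm.L x y = 0) := by
  have hBh : Bh.SeparatingLeft :=
    separatingLeft_of_apply_self_ne_zero fun y hy => (hpos_h y hy).ne'
  exact (sd_adjoint_skew_iff_L_eq_zero_general cm Bh Bg hBh hskew_g).trans LinearMap.ext_iff₂
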